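/- Let λ ∈ ℝ. The function F_λ(x) = ψ'(x) − λ(4 + 8x + 5x²)/(24x(1+x)³(2+x)²) − (24 + 120x + 283x² + 399x³ + 345x⁴ + 181x⁵ + 51x⁶ + 6x⁷)/(6x²(1+x)⁴(2+x)²) is completely monotonic on (0,∞) if and only if λ ≤ 0. -/

import Mathlib

/-- The digamma function `ψ(x) = Γ'(x)/Γ(x)`. -/
noncomputable def digamma (x : ℝ) : ℝ := deriv Real.Gamma x / Real.Gamma x

/-- A function is completely monotonic on a set `s` if it has derivatives of all
orders there and `(-1)^n f^(n)(x) ≥ 0` for all `x ∈ s` and all `n ≥ 0`. -/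
def CompletelyMonotonicOn (f : ℝ → ℝ) (s : Set ℝ) : Prop :=
  ContDiffOn ℝ (⊤ : ℕ∞) f s ∧
    ∀ n : ℕ, ∀ x ∈ s, 0 ≤ (-1 : ℝ) ^ n * iteratedDerivWithin n f s x


open Set Filter Topology

/-- `n`-fold complete monotonicity on `(0, ∞)`. -/
def CMn : ℕ → (ℝ → ℝ) → Prop
  | 0, f => ∀ x, 0 < x → 0 ≤ f x
  | n + 1, f => (∀ x, 0 < x → 0 ≤ f x) ∧
      ∃ g : ℝ → ℝ, (∀ x, 0 < x → HasDerivAt f (-g x) x) ∧ CMn n g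

/-- `n`-fold differentiability with all derivatives tending to zero along `x + ℕ`. -/
def Van : ℕ → (ℝ → ℝ) → Prop
  | 0, f => ∀ x, 0 < x → Tendsto (fun N : ℕ => f (x + N)) atTop (𝓝 0)
  | n + 1, f => (∀ x, 0 < x → Tendsto (fun N : ℕ => f (x + N)) atTop (𝓝 0)) ∧
      ∃ g : ℝ → ℝ, (∀ x, 0 < x → HasDerivAt f (-g x) x) ∧ Van n g

lemma CMn.nonneg {n : ℕ} {f : ℝ → ℝ} (h : CMn n f) : ∀ x, 0 < x → 0 ≤ f x := by
  cases n with
  | zero => exact h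
  | succ n => exact h.1

lemma CMn.pred {n : ℕ} {f : ℝ → ℝ} (h : CMn (n + 1) f) : CMn n f := by
  induction n generalizing f with
  | zero => exact h.1
  | succ n ih =>
    obtain ⟨h0, g, hg, hc⟩ := h
    exact ⟨h0, g, hg, ih hc⟩

lemma CMn.add {n : ℕ} {f g : ℝ → ℝ} (hf : CMn n f) (hg : CMn n g) :
    CMn n (fun x => f x + g x) := by
  induction n generalizing f g with
  | zero => exact fun x hx => add_nonneg (hf x hx) (hg x hx)
  | succ n ih =>
    obtain ⟨h0, f', hf', hc⟩ := hf
    obtain ⟨k0, g', hg', kc⟩ := hg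
    refine ⟨fun x hx => add_nonneg (h0 x hx) (k0 x hx), _, fun x hx => ?_, ih hc kc⟩
    exact ((hf' x hx).add (hg' x hx)).congr_deriv (by ring)

lemma CMn.smul {n : ℕ} {f : ℝ → ℝ} (c : ℝ) (hc : 0 ≤ c) (hf : CMn n f) :
    CMn n (fun x => c * f x) := by
  induction n generalizing f with
  | zero => exact fun x hx => mul_nonneg hc (hf x hx)
  | succ n ih =>
    obtain ⟨h0, f', hf', hc'⟩ := hf
    refine ⟨fun x hx => mul_nonneg hc (h0 x hx), _, fun x hx => ?_, ih hc'⟩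
    exact ((hf' x hx).const_mul c).congr_deriv (by ring)

lemma CMn.mul {n : ℕ} {f g : ℝ → ℝ} (hf : CMn n f) (hg : CMn n g) :
    CMn n (fun x => f x * g x) := by
  induction n generalizing f g with
  | zero => exact fun x hx => mul_nonneg (hf x hx) (hg x hx)
  | succ n ih =>
    have hf1 := hf.pred
    have hg1 := hg.pred
    obtain ⟨h0, f', hf', hc⟩ := hf
    obtain ⟨k0, g', hg', kc⟩ := hg
    refine ⟨fun x hx => mul_nonneg (h0 x hx) (k0 x hx), _, fun x hx => ?_,
      (ih hc hg1).add (ih hf1 kc)⟩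
    exact ((hf' x hx).mul (hg' x hx)).congr_deriv (by ring)

lemma CMn.congr {n : ℕ} {f g : ℝ → ℝ} (hf : CMn n f) (h : ∀ x, 0 < x → g x = f x) :
    CMn n g := by
  cases n with
  | zero => exact fun x hx => (h x hx) ▸ hf x hx
  | succ n =>
    obtain ⟨h0, f', hf', hc⟩ := hf
    refine ⟨fun x hx => (h x hx) ▸ h0 x hx, f', fun x hx => ?_, hc⟩
    refine (hf' x hx).congr_of_eventuallyEq ?_
    filter_upwards [eventually_gt_nhds hx] using h

lemma hasDerivAt_inv_add (a : ℝ) (ha : 0 ≤ a) (x : ℝ) (hx : 0 < x) :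
    HasDerivAt (fun x : ℝ => (x + a)⁻¹) (-((x + a)⁻¹ * (x + a)⁻¹)) x := by
  have h : x + a ≠ 0 := by positivity
  refine (((hasDerivAt_id x).add_const a).inv h).congr_deriv ?_
  simp only [id]
  field_simp

lemma CMn.inv (n : ℕ) (a : ℝ) (ha : 0 ≤ a) : CMn n (fun x => (x + a)⁻¹) := by
  induction n with
  | zero => intro x hx; positivity
  | succ n ih =>
    exact ⟨fun x hx => by positivity, _, hasDerivAt_inv_add a ha, ih.mul ih⟩

lemma CMn.inv_pow (n : ℕ) (a : ℝ) (ha : 0 ≤ a) (m : ℕ) :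
    CMn n (fun x => (x + a)⁻¹ ^ (m + 1)) := by
  induction m with
  | zero => simpa using CMn.inv n a ha
  | succ m ih =>
    simp_rw [pow_succ _ (m + 1)]
    exact ih.mul (CMn.inv n a ha)

/-- The derivatives of the Laplace transform of `(t - c)^2`. -/
lemma CMn.sq (n : ℕ) (a c : ℝ) (ha : 0 ≤ a) (m : ℕ) : CMn n (fun x =>
    (m + 1) * (m + 2) * (x + a)⁻¹ ^ (m + 3) - 2 * c * (m + 1) * (x + a)⁻¹ ^ (m + 2)
      + c ^ 2 * (x + a)⁻¹ ^ (m + 1)) := by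
  have key : ∀ m : ℕ, ∀ x : ℝ, 0 < x → 0 ≤ 
    (m + 1) * (m + 2) * (x + a)⁻¹ ^ (m + 3) - 2 * c * (m + 1) * (x + a)⁻¹ ^ (m + 2)
      + c ^ 2 * (x + a)⁻¹ ^ (m + 1) := by
    intro m x hx
    have hp : 0 < (x + a)⁻¹ := by positivity
    set u := (x + a)⁻¹
    have : (m + 1) * (m + 2) * u ^ (m + 3) - 2 * c * (m + 1) * u ^ (m + 2) + c ^ 2 * u ^ (m + 1)
      = u ^ (m + 1) * (((m + 1) * u - c) ^ 2 + (m + 1) * u ^ 2) := by ring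
    rw [this]
    positivity
  induction n generalizing m with
  | zero => exact key m
  | succ n ih =>
    refine ⟨key m, _, fun x hx => ?_, (ih (m + 1)).smul (m + 1) (by positivity)⟩
    have hd := hasDerivAt_inv_add a ha x hx
    refine (((hd.pow (m + 3)).const_mul ((m + 1) * (m + 2) : ℝ)).sub
      ((hd.pow (m + 2)).const_mul (2 * c * (m + 1)))).add
      ((hd.pow (m + 1)).const_mul (c ^ 2)) |>.congr_deriv ?_
    push_cast
    ring

lemma CMn.iter {n : ℕ} {f : ℝ → ℝ} (hf : CMn n f) (x : ℝ) (hx : 0 < x) :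
    0 ≤ (-1 : ℝ) ^ n * iteratedDerivWithin n f (Ioi 0) x := by
  induction n generalizing f with
  | zero => simpa using hf x hx
  | succ n ih =>
    obtain ⟨h0, f', hf', hc⟩ := hf
    have he : EqOn (derivWithin f (Ioi 0)) (-f') (Ioi 0) := fun y hy =>
      (hf' y hy).hasDerivWithinAt.derivWithin (isOpen_Ioi.uniqueDiffWithinAt hy)
    rw [iteratedDerivWithin_succ', iteratedDerivWithin_congr he hx, iteratedDerivWithin_neg]
    have := ih hc
    rw [pow_succ]
    linarith

lemma CMn.contDiffOn {n : ℕ} {f : ℝ → ℝ} (hf : CMn (n + 1) f) :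
    ContDiffOn ℝ n f (Ioi 0) := by
  induction n generalizing f with
  | zero =>
    obtain ⟨h0, f', hf', hc⟩ := hf
    simp only [Nat.cast_zero, contDiffOn_zero]
    exact fun x hx => (hf' x hx).continuousAt.continuousWithinAt
  | succ n ih =>
    obtain ⟨h0, f', hf', hc⟩ := hf
    push_cast
    rw [contDiffOn_succ_iff_deriv_of_isOpen isOpen_Ioi]
    refine ⟨fun x hx => (hf' x hx).differentiableAt.differentiableWithinAt, by simp, ?_⟩
    exact (ih hc).neg.congr fun x hx => (hf' x hx).deriv

lemma CMn.cm {f : ℝ → ℝ} (hf : ∀ n, CMn n f) : CompletelyMonotonicOn f (Ioi 0) :=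
  ⟨contDiffOn_infty.2 fun n => (hf (n + 1)).contDiffOn, fun n x hx => (hf n).iter x hx⟩

lemma Van.tend {n : ℕ} {f : ℝ → ℝ} (h : Van n f) :
    ∀ x, 0 < x → Tendsto (fun N : ℕ => f (x + N)) atTop (𝓝 0) := by
  cases n with
  | zero => exact h
  | succ n => exact h.1

lemma Van.pred {n : ℕ} {f : ℝ → ℝ} (h : Van (n + 1) f) : Van n f := by
  induction n generalizing f with
  | zero => exact h.1
  | succ n ih =>
    obtain ⟨h0, g, hg, hc⟩ := h
    exact ⟨h0, g, hg, ih hc⟩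

lemma Van.add {n : ℕ} {f g : ℝ → ℝ} (hf : Van n f) (hg : Van n g) :
    Van n (fun x => f x + g x) := by
  have ht : ∀ x, 0 < x → Tendsto (fun N : ℕ => f (x + N) + g (x + N)) atTop (𝓝 0) :=
    fun x hx => by simpa using (hf.tend x hx).add (hg.tend x hx)
  induction n generalizing f g with
  | zero => exact ht
  | succ n ih =>
    obtain ⟨h0, f', hf', hc⟩ := hf
    obtain ⟨k0, g', hg', kc⟩ := hg
    refine ⟨ht, _, fun x hx => ?_, ih hc kc
      (fun x hx => by simpa using (hc.tend x hx).add (kc.tend x hx))⟩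
    exact ((hf' x hx).add (hg' x hx)).congr_deriv (by ring)

lemma Van.smul {n : ℕ} {f : ℝ → ℝ} (c : ℝ) (hf : Van n f) :
    Van n (fun x => c * f x) := by
  induction n generalizing f with
  | zero => exact fun x hx => by simpa using (hf x hx).const_mul c
  | succ n ih =>
    obtain ⟨h0, f', hf', hc'⟩ := hf
    refine ⟨fun x hx => by simpa using (h0 x hx).const_mul c, _, fun x hx => ?_, ih hc'⟩
    exact ((hf' x hx).const_mul c).congr_deriv (by ring)

lemma Van.mul {n : ℕ} {f g : ℝ → ℝ} (hf : Van n f) (hg : Van n g) :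
    Van n (fun x => f x * g x) := by
  induction n generalizing f g with
  | zero => exact fun x hx => by simpa using (hf x hx).mul (hg x hx)
  | succ n ih =>
    have hf1 := hf.pred
    have hg1 := hg.pred
    obtain ⟨h0, f', hf', hc⟩ := hf
    obtain ⟨k0, g', hg', kc⟩ := hg
    refine ⟨fun x hx => by simpa using (h0 x hx).mul (k0 x hx), _, fun x hx => ?_,
      (ih hc hg1).add (ih hf1 kc)⟩
    exact ((hf' x hx).mul (hg' x hx)).congr_deriv (by ring)

lemma tendsto_inv_aux (a x : ℝ) : Tendsto (fun N : ℕ => (x + N + a)⁻¹) atTop (𝓝 0) := by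
  refine tendsto_inv_atTop_zero.comp ?_
  refine tendsto_atTop_add_const_right _ _ (tendsto_atTop_add_const_left _ _ ?_)
  exact tendsto_natCast_atTop_atTop

lemma Van.inv (n : ℕ) (a : ℝ) (ha : 0 ≤ a) : Van n (fun x => (x + a)⁻¹) := by
  induction n with
  | zero => exact fun x _ => tendsto_inv_aux a x
  | succ n ih =>
    exact ⟨fun x _ => tendsto_inv_aux a x, _, hasDerivAt_inv_add a ha, ih.mul ih⟩

lemma Van.inv_pow (n : ℕ) (a : ℝ) (ha : 0 ≤ a) (m : ℕ) :
    Van n (fun x => (x + a)⁻¹ ^ (m + 1)) := by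
  induction m with
  | zero => simpa using Van.inv n a ha
  | succ m ih =>
    simp_rw [pow_succ _ (m + 1)]
    exact ih.mul (Van.inv n a ha)

/-- Telescoping. -/
lemma CMn.of_diff {n : ℕ} {G D : ℝ → ℝ} (hG : Van n G) (hD : CMn n D)
    (h : ∀ x, 0 < x → G x - G (x + 1) = D x) : CMn n G := by
  have nn : ∀ x, 0 < x → 0 ≤ G x := by
    intro x hx
    have hanti : Antitone (fun N : ℕ => G (x + N)) := by
      refine antitone_nat_of_succ_le fun N => ?_
      have hp : 0 < x + N := by positivity
      have h1 := h (x + N) hp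
      have h2 := hD.nonneg _ hp
      push_cast
      rw [← add_assoc]
      linarith
    have := hanti.le_of_tendsto (hG.tend x hx) 0
    simpa using this
  induction n generalizing G D with
  | zero => exact nn
  | succ n ih =>
    obtain ⟨h0, g, hg, hc⟩ := hG
    obtain ⟨k0, d, hd, kc⟩ := hD
    have hdiff : ∀ x, 0 < x → g x - g (x + 1) = d x := by
      intro x hx
      have e1 := (hg x hx).sub ((hg (x + 1) (by positivity)).comp_add_const x 1)
      have e2 := (hd x hx)
      have e3 := e1.unique (e2.congr_of_eventuallyEq (f₁ := fun x => G x - G (x + 1)) (by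
        filter_upwards [eventually_gt_nhds hx] using h))
      linarith
    refine ⟨nn, g, hg, ih hc kc hdiff ?_⟩
    intro x hx
    have hanti : Antitone (fun N : ℕ => g (x + N)) := by
      refine antitone_nat_of_succ_le fun N => ?_
      have hp : 0 < x + N := by positivity
      have h1 := hdiff (x + N) hp
      have h2 := kc.nonneg _ hp
      push_cast
      rw [← add_assoc]
      linarith
    have := hanti.le_of_tendsto (hc.tend x hx) 0
    simpa using this

/-- `S m x = ∑ 1/(x+k)^(m+2)`. -/
noncomputable def Sser (m : ℕ) (x : ℝ) : ℝ := ∑' k : ℕ, (x + k)⁻¹ ^ (m + 2)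

lemma summable_S (m : ℕ) (x : ℝ) (hx : 0 < x) : Summable fun k : ℕ => (x + k)⁻¹ ^ (m + 2) := by
  have h := (Real.summable_one_div_nat_add_rpow x ((m + 2 : ℕ) : ℝ)).2 (by
    push_cast
    have : (0 : ℝ) ≤ m := by positivity
    linarith)
  refine h.congr fun k => ?_
  have hp : 0 < (k : ℝ) + x := by positivity
  rw [Real.rpow_natCast, abs_of_pos hp, one_div, inv_pow, add_comm]

lemma hasDerivAt_inv_pow (a : ℝ) (ha : 0 ≤ a) (m : ℕ) (x : ℝ) (hx : 0 < x) :
    HasDerivAt (fun x : ℝ => (x + a)⁻¹ ^ (m + 1)) (-((m + 1) * (x + a)⁻¹ ^ (m + 2))) x := by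
  refine ((hasDerivAt_inv_add a ha x hx).pow (m + 1)).congr_deriv ?_
  push_cast
  ring

lemma hasDerivAt_S (m : ℕ) (x : ℝ) (hx : 0 < x) :
    HasDerivAt (Sser m) (-((m + 2) * Sser (m + 1) x)) x := by
  have hx2 : 0 < x / 2 := by positivity
  have hmem : x ∈ Ioi (x / 2) := by simp only [mem_Ioi]; linarith
  have := hasDerivAt_tsum_of_isPreconnected
    (u := fun k : ℕ => ((m : ℝ) + 2) * (x / 2 + k)⁻¹ ^ (m + 3))
    (g := fun (k : ℕ) (x : ℝ) => (x + k)⁻¹ ^ (m + 2))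
    (g' := fun (k : ℕ) (x : ℝ) => -(((m : ℝ) + 2) * (x + k)⁻¹ ^ (m + 3)))
    (t := Ioi (x / 2)) (y₀ := x) (y := x) ((summable_S (m + 1) _ hx2).mul_left _)
    isOpen_Ioi isPreconnected_Ioi ?_ ?_ hmem (summable_S m x hx) hmem
  · refine this.congr_deriv ?_
    rw [tsum_neg, tsum_mul_left]
    rfl
  · intro k y hy
    have hy0 : 0 < y := hx2.trans hy
    refine (hasDerivAt_inv_pow k (by positivity) (m + 1) y hy0).congr_deriv ?_
    push_cast
    ring
  · intro k y hy
    have hy0 : 0 < y := hx2.trans hy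
    have hy' : x / 2 ≤ y := le_of_lt hy
    rw [norm_neg, Real.norm_of_nonneg (by positivity)]
    gcongr

lemma tendsto_S (m : ℕ) (x : ℝ) : Tendsto (fun N : ℕ => Sser m (x + N)) atTop (𝓝 0) := by
  refine (tendsto_sum_nat_add fun k : ℕ => (x + k)⁻¹ ^ (m + 2)).congr fun N => ?_
  unfold Sser
  refine tsum_congr fun k => ?_
  push_cast
  ring_nf

lemma Van.S (n m : ℕ) : Van n (Sser m) := by
  induction n generalizing m with
  | zero => exact fun x _ => tendsto_S m x
  | succ n ih =>
    exact ⟨fun x _ => tendsto_S m x, _, hasDerivAt_S m, (ih (m + 1)).smul _⟩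

lemma S_rec (x : ℝ) (hx : 0 < x) : Sser 0 x = x⁻¹ ^ 2 + Sser 0 (x + 1) := by
  unfold Sser
  rw [(summable_S 0 x hx).tsum_eq_zero_add]
  congr 1
  · simp
  · refine tsum_congr fun k => ?_
    push_cast
    ring_nf

lemma S_anti (x : ℝ) (hx : 0 < x) : Sser 0 (x + 1) ≤ Sser 0 1 := by
  unfold Sser
  refine (summable_S 0 _ (by positivity)).tsum_le_tsum (fun k => ?_) (summable_S 0 _ one_pos)
  gcongr
  linarith

lemma digamma_facts : (∀ x, 0 < x → digamma (x + 1) = digamma x + x⁻¹) ∧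
    (∀ x, 0 < x → digamma x ≤ Real.log x) ∧ (∀ x, 0 < x → Real.log x ≤ digamma (x + 1)) := by
  let f := Real.log ∘ Real.Gamma
  have hc : ConvexOn ℝ (Ioi 0) f := Real.convexOn_log_Gamma
  have h_rec (x : ℝ) (hx : 0 < x) : f (x + 1) = f x + Real.log x := by
    simp only [f, Function.comp_apply, Real.Gamma_add_one hx.ne',
      Real.log_mul hx.ne' (Real.Gamma_pos_of_pos hx).ne', add_comm]
  have hdG {x : ℝ} (hx : 0 < x) : DifferentiableAt ℝ Real.Gamma x := 
    Real.differentiableAt_Gamma fun m => ne_of_gt (by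
      have : (0 : ℝ) ≤ m := by positivity
      linarith)
  have hder {x : ℝ} (hx : 0 < x) : DifferentiableAt ℝ f x :=
    (hdG hx).log (Real.Gamma_pos_of_pos hx).ne'
  have hdig {x : ℝ} (hx : 0 < x) : digamma x = deriv f x := by
    rw [show f = fun x => Real.log (Real.Gamma x) from rfl,
      deriv.log (hdG hx) (Real.Gamma_pos_of_pos hx).ne']
    rfl
  refine ⟨fun x hx => ?_, fun x hx => ?_, fun x hx => ?_⟩
  · rw [hdig hx, hdig (by positivity), ← deriv_comp_add_const, ← Real.deriv_log,
      ← deriv_add (hder <| by positivity) (Real.differentiableAt_log hx.ne')]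
    apply EventuallyEq.deriv_eq
    filter_upwards [eventually_gt_nhds hx] using h_rec
  · rw [hdig hx]
    refine (hc.deriv_le_slope (y := x + 1) hx (show (0 : ℝ) < x + 1 by positivity)
      (by linarith) (hder hx)).trans (le_of_eq ?_)
    rw [slope_def_field, h_rec x hx]
    ring
  · rw [hdig (by positivity)]
    refine (le_of_eq ?_).trans (hc.slope_le_deriv (x := x) hx (show (0 : ℝ) < x + 1 by positivity)
      (by linarith) (hder (by positivity)))
    rw [slope_def_field, h_rec x hx]
    ring

lemma digamma_sub_log (x : ℝ) (hx : 0 < x) :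
    Tendsto (fun N : ℕ => digamma (x + N) - Real.log (x + N)) atTop (𝓝 0) := by
  obtain ⟨h1, h2, h3⟩ := digamma_facts
  have ht : Tendsto (fun N : ℕ => -(x + N + 0)⁻¹) atTop (𝓝 0) := by
    simpa using (tendsto_inv_aux 0 x).neg
  refine tendsto_of_tendsto_of_tendsto_of_le_of_le ht tendsto_const_nhds (fun N => ?_)
    (fun N => ?_)
  · have hp : 0 < x + N := by positivity
    have := h1 _ hp
    have := h3 _ hp
    simp only [add_zero]
    linarith
  · have hp : 0 < x + N := by positivity
    have := h2 _ hp
    simp only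
    linarith

lemma log_sub_log (x : ℝ) :
    Tendsto (fun N : ℕ => Real.log (x + N) - Real.log N) atTop (𝓝 0) := by
  have := (Real.tendsto_log_comp_add_sub_log x).comp tendsto_natCast_atTop_atTop (α := ℕ)
  refine this.congr fun N => ?_
  simp [add_comm]

lemma digamma_sum (x : ℝ) (hx : 0 < x) (n : ℕ) :
    digamma (x + n) = digamma x + ∑ k ∈ Finset.range n, (x + k)⁻¹ := by
  induction n with
  | zero => simp
  | succ n ih =>
    rw [Finset.sum_range_succ, ← add_assoc, ← ih, ← digamma_facts.1 _ (by positivity)]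
    push_cast
    ring_nf

lemma digamma_tendsto (x : ℝ) (hx : 0 < x) : Tendsto
    (fun n : ℕ => ∑ k ∈ Finset.range n, ((1 + (k : ℝ))⁻¹ - (x + k)⁻¹)) atTop
    (𝓝 (digamma x - digamma 1)) := by
  have h := (((digamma_sub_log 1 one_pos).add (log_sub_log 1)).sub
    ((digamma_sub_log x hx).add (log_sub_log x))).add_const (digamma x - digamma 1)
  simp only [add_zero, sub_zero, zero_add] at h
  refine h.congr fun n => ?_
  rw [Finset.sum_sub_distrib]
  have := digamma_sum x hx n
  have := digamma_sum 1 one_pos n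
  linarith

lemma summable_T (x : ℝ) (hx : 0 < x) :
    Summable fun k : ℕ => (1 + (k : ℝ))⁻¹ - (x + k)⁻¹ := by
  have hmin : 0 < min 1 x := by positivity
  refine Summable.of_norm_bounded ((summable_S 0 (min 1 x) hmin).mul_left |x - 1|) fun k => ?_
  have e : (1 + (k : ℝ))⁻¹ - (x + k)⁻¹ = (x - 1) * ((1 + (k : ℝ))⁻¹ * (x + k)⁻¹) := by
    have : 1 + (k : ℝ) ≠ 0 := by positivity
    have : x + (k : ℝ) ≠ 0 := by positivity
    field_simp
    ring
  rw [e, norm_mul, Real.norm_eq_abs, Real.norm_of_nonneg (by positivity)]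
  gcongr
  rw [zero_add, pow_two]
  gcongr
  · exact min_le_left _ _
  · exact min_le_right _ _

lemma digamma_eq (x : ℝ) (hx : 0 < x) :
    digamma x = ∑' k : ℕ, ((1 + (k : ℝ))⁻¹ - (x + k)⁻¹) + digamma 1 := by
  have := tendsto_nhds_unique (digamma_tendsto x hx) (summable_T x hx).hasSum.tendsto_sum_nat
  linarith

lemma deriv_digamma (x : ℝ) (hx : 0 < x) : deriv digamma x = Sser 0 x := by
  have hx2 : 0 < x / 2 := by positivity
  have hmem : x ∈ Ioi (x / 2) := by simp only [mem_Ioi]; linarith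
  have hsum : Summable fun k : ℕ => (x / 2 + k)⁻¹ ^ 2 := summable_S 0 _ hx2
  have hS : Sser 0 x = ∑' k : ℕ, (x + k)⁻¹ ^ 2 := rfl
  have hd : HasDerivAt (fun z : ℝ => ∑' k : ℕ, ((1 + (k : ℝ))⁻¹ - (z + k)⁻¹)) (Sser 0 x) x := by
    rw [hS]
    refine hasDerivAt_tsum_of_isPreconnected
      (g' := fun (k : ℕ) (x : ℝ) => (x + k)⁻¹ ^ 2) (y₀ := x)
      hsum isOpen_Ioi isPreconnected_Ioi ?_ ?_ hmem (summable_T x hx) hmem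
    · intro k y hy
      have hy0 : 0 < y := hx2.trans hy
      refine ((hasDerivAt_inv_add k (by positivity) y hy0).const_sub _).congr_deriv ?_
      ring
    · intro k y hy
      have hy0 : 0 < y := hx2.trans hy
      have hy' : x / 2 ≤ y := le_of_lt hy
      rw [Real.norm_of_nonneg (by positivity)]
      gcongr
  have he : digamma =ᶠ[𝓝 x]
      fun z : ℝ => ∑' k : ℕ, ((1 + (k : ℝ))⁻¹ - (z + k)⁻¹) + digamma 1 := by
    filter_upwards [eventually_gt_nhds hx] with y hy
    exact digamma_eq y hy
  exact ((hd.add_const (digamma 1)).congr_of_eventuallyEq he).deriv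

/-- The rational part, in decomposed form. -/
lemma rat_eq (x : ℝ) (hx : 0 < x) :
    (24 + 120 * x + 283 * x ^ 2 + 399 * x ^ 3 + 345 * x ^ 4 + 181 * x ^ 5 +
          51 * x ^ 6 + 6 * x ^ 7) / (6 * x ^ 2 * (1 + x) ^ 4 * (2 + x) ^ 2) =
    1 / 6 * (24 * ((x + 0)⁻¹ ^ (1 + 1) * ((x + 1)⁻¹ ^ (3 + 1) * (x + 2)⁻¹ ^ (1 + 1)))
      + 120 * ((x + 0)⁻¹ ^ (0 + 1) * ((x + 1)⁻¹ ^ (3 + 1) * (x + 2)⁻¹ ^ (1 + 1)))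
      + 93 * ((x + 1)⁻¹ ^ (3 + 1) * (x + 2)⁻¹ ^ (1 + 1))
      + 78 * ((x + 1)⁻¹ ^ (2 + 1) * (x + 2)⁻¹ ^ (1 + 1))
      + 48 * ((x + 1)⁻¹ ^ (1 + 1) * (x + 2)⁻¹ ^ (1 + 1))
      + 37 * ((x + 1)⁻¹ ^ (0 + 1) * (x + 2)⁻¹ ^ (1 + 1))
      + 15 * (x + 2)⁻¹ ^ (1 + 1)
      + 6 * (x + 2)⁻¹ ^ (0 + 1)) := by
  have h1 : x + 1 ≠ 0 := by positivity
  have h2 : x + 2 ≠ 0 := by positivity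
  rw [add_comm 1 x, add_comm 2 x]
  simp only [add_zero, Nat.reduceAdd]
  field_simp
  ring

noncomputable def Rfun (x : ℝ) : ℝ := (24 + 120 * x + 283 * x ^ 2 + 399 * x ^ 3 + 345 * x ^ 4 +
  181 * x ^ 5 + 51 * x ^ 6 + 6 * x ^ 7) / (6 * x ^ 2 * (1 + x) ^ 4 * (2 + x) ^ 2)

lemma Van.congr {n : ℕ} {f g : ℝ → ℝ} (hf : Van n f) (h : ∀ x, 0 < x → g x = f x) :
    Van n g := by
  have ht : ∀ x, 0 < x → Tendsto (fun N : ℕ => g (x + N)) atTop (𝓝 0) := fun x hx =>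
    (hf.tend x hx).congr fun N => (h _ (by positivity)).symm
  cases n with
  | zero => exact ht
  | succ n =>
    obtain ⟨h0, f', hf', hc⟩ := hf
    refine ⟨ht, f', fun x hx => ?_, hc⟩
    refine (hf' x hx).congr_of_eventuallyEq ?_
    filter_upwards [eventually_gt_nhds hx] using h

lemma Van.R (n : ℕ) : Van n Rfun := by
  have u := Van.inv_pow n 0 le_rfl
  have v := Van.inv_pow n 1 zero_le_one
  have w := Van.inv_pow n 2 zero_le_two
  exact (((((((((((u 1).mul ((v 3).mul (w 1))).smul 24).add
    (((u 0).mul ((v 3).mul (w 1))).smul 120)).add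
    (((v 3).mul (w 1)).smul 93)).add
    (((v 2).mul (w 1)).smul 78)).add
    (((v 1).mul (w 1)).smul 48)).add
    (((v 0).mul (w 1)).smul 37)).add
    ((w 1).smul 15)).add
    ((w 0).smul 6)).smul (1 / 6)).congr rat_eq

noncomputable def Dfun (x : ℝ) : ℝ :=
  1 / 6 * ((2 * (3 * (2 * (x + 1)⁻¹ ^ (3 + 1)))
    + (6 * (((0 : ℕ) + 1) * ((0 : ℕ) + 2) * (x + 1)⁻¹ ^ (0 + 3)
        - 2 * (3 / 4) * ((0 : ℕ) + 1) * (x + 1)⁻¹ ^ (0 + 2)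
        + (3 / 4) ^ 2 * (x + 1)⁻¹ ^ (0 + 1))
      + 37 / 8 * (x + 1)⁻¹ ^ (0 + 1))) * ((x + 2)⁻¹ ^ (3 + 1) * (x + 3)⁻¹ ^ (1 + 1))
    + (14 * ((x + 2)⁻¹ ^ (3 + 1) * (x + 3)⁻¹ ^ (1 + 1))
      + 20 * ((x + 2)⁻¹ ^ (2 + 1) * (x + 3)⁻¹ ^ (1 + 1))))

lemma CMn.D (n : ℕ) : CMn n Dfun := by
  have v := CMn.inv_pow n 1 zero_le_one
  have w := CMn.inv_pow n 2 zero_le_two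
  have z := CMn.inv_pow n 3 zero_le_three
  have s := CMn.sq n 1 (3 / 4) zero_le_one 0
  have t := ((((((v 3).smul 2 (by norm_num)).smul 3 (by norm_num)).smul 2 (by norm_num)).add
    ((s.smul 6 (by norm_num)).add ((v 0).smul (37 / 8) (by norm_num)))).mul ((w 3).mul (z 1)))
  exact (t.add ((((w 3).mul (z 1)).smul 14 (by norm_num)).add
    (((w 2).mul (z 1)).smul 20 (by norm_num)))).smul (1 / 6) (by norm_num)

lemma diff_eq (x : ℝ) (hx : 0 < x) :
    (Sser 0 x + -1 * Rfun x) - (Sser 0 (x + 1) + -1 * Rfun (x + 1)) = Dfun x := by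
  rw [S_rec x hx]
  unfold Rfun Dfun
  have e1 : 1 + (x + 1) = x + 2 := by ring
  have e2 : 2 + (x + 1) = x + 3 := by ring
  have h1 : x + 1 ≠ 0 := by positivity
  have h2 : x + 2 ≠ 0 := by positivity
  have h3 : x + 3 ≠ 0 := by positivity
  rw [e1, e2, add_comm 1 x, add_comm 2 x]
  push_cast
  field_simp
  ring

lemma CMn.F0 (n : ℕ) : CMn n (fun x => Sser 0 x + -1 * Rfun x) :=
  CMn.of_diff ((Van.S n 0).add ((Van.R n).smul (-1))) (CMn.D n) diff_eq

lemma CMn.L (n : ℕ) : CMn n (fun x => (4 + 8 * x + 5 * x ^ 2) /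
    (24 * x * (1 + x) ^ 3 * (2 + x) ^ 2)) := by
  have u := CMn.inv_pow n 0 le_rfl
  have v := CMn.inv_pow n 1 zero_le_one
  have w := CMn.inv_pow n 2 zero_le_two
  refine (((((v 1).smul 5 (by norm_num)).add (((v 2).smul 3 (by norm_num)).add
    (((u 0).mul (v 2)).smul 4 (by norm_num)))).mul (w 1)).smul (1 / 24) (by norm_num)).congr ?_
  intro x hx
  have h1 : x + 1 ≠ 0 := by positivity
  have h2 : x + 2 ≠ 0 := by positivity
  rw [add_comm 1 x, add_comm 2 x]
  simp only [add_zero, Nat.reduceAdd]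
  field_simp
  ring

lemma R_ge (x : ℝ) (hx : 0 < x) : x⁻¹ ^ 2 ≤ Rfun x := by
  have : Rfun x - x⁻¹ ^ 2 = (37 + 135 * x + 189 * x ^ 2 + 133 * x ^ 3 + 45 * x ^ 4 + 6 * x ^ 5) /
      (6 * (1 + x) ^ 4 * (2 + x) ^ 2) := by
    unfold Rfun
    have h1 : x + 1 ≠ 0 := by positivity
    have h2 : x + 2 ≠ 0 := by positivity
    rw [add_comm 1 x, add_comm 2 x]
    field_simp
    ring
  have h : 0 ≤ Rfun x - x⁻¹ ^ 2 := by rw [this]; positivity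
  linarith

lemma L_ge (x : ℝ) (hx : 0 < x) (hx1 : x ≤ 1) : 1 / (432 * x) ≤ (4 + 8 * x + 5 * x ^ 2) /
    (24 * x * (1 + x) ^ 3 * (2 + x) ^ 2) := by
  have h1 : (1 + x) ^ 3 ≤ 8 := by
    calc (1 + x) ^ 3 ≤ (1 + 1) ^ 3 := by gcongr
      _ = 8 := by norm_num
  have h2 : (2 + x) ^ 2 ≤ 9 := by
    calc (2 + x) ^ 2 ≤ (2 + 1) ^ 2 := by gcongr
      _ = 9 := by norm_num
  calc 1 / (432 * x) = 4 / (24 * x * 8 * 9) := by field_simp; norm_num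
    _ ≤ _ := by
      gcongr
      nlinarith

theorem stmt_5 (lam : ℝ) :
    CompletelyMonotonicOn
      (fun x : ℝ => deriv digamma x -
        lam * (4 + 8 * x + 5 * x ^ 2) / (24 * x * (1 + x) ^ 3 * (2 + x) ^ 2) -
        (24 + 120 * x + 283 * x ^ 2 + 399 * x ^ 3 + 345 * x ^ 4 + 181 * x ^ 5 +
          51 * x ^ 6 + 6 * x ^ 7) / (6 * x ^ 2 * (1 + x) ^ 4 * (2 + x) ^ 2))
      (Set.Ioi 0) ↔ lam ≤ 0 := by
  constructor
  · rintro ⟨-, h⟩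
    by_contra! hl
    set C := Sser 0 1
    have hC : 0 ≤ C := tsum_nonneg fun k => by positivity
    have key : ∀ x : ℝ, 0 < x → x ≤ 1 → lam ≤ 432 * x * C := by
      intro x hx hx1
      have h0 := h 0 x hx
      simp only [pow_zero, one_mul, iteratedDerivWithin_zero] at h0
      rw [deriv_digamma x hx, S_rec x hx, mul_div_assoc] at h0
      have hR := R_ge x hx
      unfold Rfun at hR
      have hL := mul_le_mul_of_nonneg_left (L_ge x hx hx1) hl.le
      have hS := S_anti x hx
      have hfin : lam * (1 / (432 * x)) ≤ C := by linarith
      rw [mul_one_div, div_le_iff₀ (by positivity)] at hfin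
      linarith
    have h1 := key 1 one_pos le_rfl
    have hCpos : 0 < C := by nlinarith
    have hx : 0 < lam / (864 * C) := by positivity
    have h2 := key (lam / (864 * C)) hx (by rw [div_le_one (by positivity)]; linarith)
    have h3 : 432 * (lam / (864 * C)) * C = lam / 2 := by field_simp; norm_num
    linarith
  · intro hl
    refine CMn.cm fun n => ((CMn.F0 n).add ((CMn.L n).smul (-lam) (by linarith))).congr ?_
    intro x hx
    rw [deriv_digamma x hx]
    unfold Rfun
    ring
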